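/- arXiv:1401.0903 — 2 statements merged into one kernel-verified Lean document; each statement's English description precedes it below -/
import Mathlib

section
/- Let Φ be a Hawkes kernel matrix satisfying hypothesis (H). Then for every 1 ≤ i,j ≤ D the series Σ_{k=1}^∞ (Φ^{⋆k})^{ij} converges absolutely in L¹(ℝ), so that Ψ = Σ_{k=1}^∞ Φ^{⋆k} is well defined with nonnegative, causal, integrable entries, and the matrix of L¹ norms of Ψ satisfies the entrywise bound ∫_ℝ Ψ^{ij}(t) dt ≤ ((I − ‖Φ‖)^{−1} ‖Φ‖)^{ij} for all 1 ≤ i,j ≤ D. -/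
open MeasureTheory Matrix Filter Set

/-- Entrywise matrix convolution:
`(A ⋆ B)^{ij}(t) = ∑_{k} ∫ A^{ik}(s) B^{kj}(t - s) ds`. -/
noncomputable def mconv (D : ℕ) (A B : ℝ → Matrix (Fin D) (Fin D) ℝ) :
    ℝ → Matrix (Fin D) (Fin D) ℝ :=
  fun t => Matrix.of fun i j => ∑ k : Fin D, ∫ s : ℝ, A s i k * B (t - s) k j

/-- `mconvIter D Φ k` is the `(k+1)`-fold matrix convolution `Φ^{⋆(k+1)}`. -/
noncomputable def mconvIter (D : ℕ) (Φ : ℝ → Matrix (Fin D) (Fin D) ℝ) :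
    ℕ → ℝ → Matrix (Fin D) (Fin D) ℝ
  | 0 => Φ
  | (k + 1) => mconv D Φ (mconvIter D Φ k)

/-- `Ψ = ∑_{k=1}^∞ Φ^{⋆k}`, defined entrywise as a pointwise sum. -/
noncomputable def hawkesPsi (D : ℕ) (Φ : ℝ → Matrix (Fin D) (Fin D) ℝ) :
    ℝ → Matrix (Fin D) (Fin D) ℝ :=
  fun t => Matrix.of fun i j => ∑' k : ℕ, mconvIter D Φ k t i j

/-- The matrix `‖Φ‖` of `L¹` norms: `‖Φ‖^{ij} = ∫ φ^{ij}(t) dt` (entries nonnegative). -/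
noncomputable def kernelNorm (D : ℕ) (Φ : ℝ → Matrix (Fin D) (Fin D) ℝ) :
    Matrix (Fin D) (Fin D) ℝ :=
  Matrix.of fun i j => ∫ t : ℝ, Φ t i j

/-- A Hawkes kernel matrix: measurable, nonnegative, integrable and causal entries. -/
def IsHawkesKernel (D : ℕ) (Φ : ℝ → Matrix (Fin D) (Fin D) ℝ) : Prop :=
  (∀ i j, Measurable fun t => Φ t i j) ∧
  (∀ t, ∀ i j, 0 ≤ Φ t i j) ∧
  (∀ i j, Integrable fun t => Φ t i j) ∧
  (∀ t < (0 : ℝ), Φ t = 0)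

/-- Hypothesis (H): the spectral radius of `‖Φ‖` is strictly smaller than 1. -/
def HypothesisH (D : ℕ) (Φ : ℝ → Matrix (Fin D) (Fin D) ℝ) : Prop :=
  spectralRadius ℂ ((kernelNorm D Φ).map Complex.ofReal) < 1

/-- `q(t) = Σ Ψ(-t)ᵀ Σ⁻¹`. -/
noncomputable def hawkesQ (D : ℕ) (Φ : ℝ → Matrix (Fin D) (Fin D) ℝ)
    (S : Matrix (Fin D) (Fin D) ℝ) : ℝ → Matrix (Fin D) (Fin D) ℝ :=
  fun t => S * (hawkesPsi D Φ (-t))ᵀ * S⁻¹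

/-- The conditional-expectation matrix
`g(t) = Ψ(t) + Σ Ψ(-t)ᵀ Σ⁻¹ + (Ψ ⋆ q)(t)`. -/
noncomputable def hawkesG (D : ℕ) (Φ : ℝ → Matrix (Fin D) (Fin D) ℝ)
    (S : Matrix (Fin D) (Fin D) ℝ) : ℝ → Matrix (Fin D) (Fin D) ℝ :=
  fun t => hawkesPsi D Φ t + hawkesQ D Φ S t +
    mconv D (hawkesPsi D Φ) (hawkesQ D Φ S) t

/-- Entrywise Laplace transform `F̂(z) = ∫ F(t) e^{zt} dt`. -/
noncomputable def mlaplace (D : ℕ) (F : ℝ → Matrix (Fin D) (Fin D) ℝ) (z : ℂ) :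
    Matrix (Fin D) (Fin D) ℂ :=
  Matrix.of fun i j => ∫ t : ℝ, (F t i j : ℂ) * Complex.exp (z * t)

/-!
Integrating a convolution multiplies the integrals, so `Φ ↦ ‖Φ‖` turns matrix convolution into the
matrix product and `‖Φ^{⋆k}‖ = ‖Φ‖ ^ k`. By Gelfand's formula, a spectral radius smaller than `1`
makes the geometric series `∑ ‖Φ‖ ^ k` converge. As the entries of `Φ^{⋆k}` are nonnegative, this is
absolute convergence in `L¹`, and integrating term by term even gives the equality
`‖Ψ‖ = (I - ‖Φ‖)⁻¹ ‖Φ‖`.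
-/

section GeometricSeries

theorem summable_norm_pow_of_spectralRadius_lt_one {A : Type*} [NormedRing A] [NormedAlgebra ℂ A]
    [CompleteSpace A] {a : A} (ha : spectralRadius ℂ a < 1) : Summable fun n : ℕ => ‖a ^ n‖ := by
  obtain ⟨r, har, hr⟩ := ENNReal.lt_iff_exists_nnreal_btwn.1 ha
  have hroot : ∀ᶠ n : ℕ in atTop, (‖a ^ n‖₊ : ENNReal) ^ (1 / n : ℝ) < r :=
    (spectrum.pow_nnnorm_pow_one_div_tendsto_nhds_spectralRadius a).eventually_lt_const har
  have hpow : ∀ᶠ n : ℕ in atTop, ‖‖a ^ n‖‖ ≤ (r : ℝ) ^ n := by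
    filter_upwards [hroot, eventually_gt_atTop 0] with n hn hn0
    rw [one_div] at hn
    have hle : (‖a ^ n‖₊ : ENNReal) ≤ r ^ n := by
      simpa only [ENNReal.rpow_natCast] using
        (ENNReal.rpow_inv_le_iff (Nat.cast_pos.2 hn0)).1 hn.le
    rw [norm_norm]
    exact_mod_cast hle
  have hgeom : Summable fun n : ℕ => (r : ℝ) ^ n :=
    summable_geometric_of_lt_one r.2 (by exact_mod_cast hr)
  exact hgeom.of_norm_bounded_eventually_nat hpow

variable {n : Type*} [Fintype n] [DecidableEq n]

theorem summable_pow_of_spectralRadius_map_ofReal_lt_one {N : Matrix n n ℝ}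
    (hN : spectralRadius ℂ (N.map Complex.ofReal) < 1) : Summable fun k : ℕ => N ^ k := by
  let := Matrix.linftyOpNormedRing (n := n) (α := ℂ)
  let := Matrix.linftyOpNormedAlgebra (R := ℂ) (n := n) (α := ℂ)
  have hpow : Summable fun k : ℕ => N.map Complex.ofReal ^ k :=
    (summable_norm_pow_of_spectralRadius_lt_one hN).of_norm
  have hre : ∀ k : ℕ, (N.map Complex.ofReal ^ k).map Complex.re = N ^ k := fun k => by
    have hofReal : N.map Complex.ofReal ^ k = (N ^ k).map Complex.ofReal :=
      (N.map_pow Complex.ofRealHom k).symm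
    ext i j
    simp only [hofReal, Matrix.map_apply, Complex.ofReal_re]
  simpa only [Function.comp_def, AddMonoidHom.mapMatrix_apply, Complex.coe_reAddGroupHom, hre] using
    hpow.map Complex.reAddGroupHom.mapMatrix (continuous_id.matrix_map Complex.continuous_re)

theorem hasSum_pow_succ_of_summable_pow {R : Type*} [CommRing R] [TopologicalSpace R]
    [IsTopologicalRing R] [T2Space R] {N : Matrix n n R} (hN : Summable fun k : ℕ => N ^ k) :
    HasSum (fun k : ℕ => N ^ (k + 1)) ((1 - N)⁻¹ * N) := by
  rw [Matrix.inv_eq_right_inv hN.one_sub_mul_tsum_pow]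
  simpa only [pow_succ] using hN.hasSum.mul_right N

end GeometricSeries

theorem integrable_tsum_of_summable_integral_norm {ι α E : Type*} [Countable ι]
    [MeasurableSpace α] {μ : Measure α} [NormedAddCommGroup E] [CompleteSpace E] {F : ι → α → E}
    (hF : ∀ i, Integrable (F i) μ) (hsum : Summable fun i => ∫ a, ‖F i a‖ ∂μ) :
    Integrable (fun a => ∑' i, F i a) μ := by
  have htop : ∑' i, ‖(hF i).toL1 (F i)‖ₑ ≠ ⊤ := by
    rw [tsum_enorm_ne_top_iff_summable_norm]
    simpa only [L1.norm_of_fun_eq_integral_norm] using hsum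
  have hcoe : ∀ᵐ a ∂μ, ∀ i, (hF i).toL1 (F i) a = F i a :=
    ae_all_iff.2 fun i => (hF i).coeFn_toL1
  refine (L1.integrable_coeFn (∑' i, (hF i).toL1 (F i))).congr ?_
  filter_upwards [Lp.coeFn_tsum htop, hcoe] with a ha hFa
  simp only [ha, hFa]

section Convolution

variable {D : ℕ} {A B Φ : ℝ → Matrix (Fin D) (Fin D) ℝ}

theorem mconv_apply (t : ℝ) (i j : Fin D) :
    mconv D A B t i j = ∑ k, ∫ s, A s i k * B (t - s) k j :=
  rfl

theorem mconv_nonneg (hA : ∀ t i j, 0 ≤ A t i j) (hB : ∀ t i j, 0 ≤ B t i j) (t : ℝ)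
    (i j : Fin D) : 0 ≤ mconv D A B t i j := by
  rw [mconv_apply]
  exact Finset.sum_nonneg fun k _ => integral_nonneg fun s => mul_nonneg (hA s i k) (hB _ k j)

theorem mconv_eq_zero_of_neg (hA : ∀ t < 0, A t = 0) (hB : ∀ t < 0, B t = 0) {t : ℝ}
    (ht : t < 0) : mconv D A B t = 0 := by
  have hzero : ∀ s, A s = 0 ∨ B (t - s) = 0 := fun s =>
    (lt_or_ge s 0).imp (hA s) fun hs => hB _ (by linarith)
  ext i j
  rw [mconv_apply]
  refine Finset.sum_eq_zero fun k _ => integral_eq_zero_of_ae (ae_of_all _ fun s => ?_)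
  rcases hzero s with hs | hs <;> simp [hs]

theorem integrable_mconv (hA : ∀ i j, Integrable fun t => A t i j)
    (hB : ∀ i j, Integrable fun t => B t i j) (i j : Fin D) :
    Integrable fun t => mconv D A B t i j := by
  simp only [mconv_apply]
  exact integrable_finsetSum _ fun k _ =>
    (hA i k).integrable_convolution (ContinuousLinearMap.mul ℝ ℝ) (hB k j)

theorem kernelNorm_mconv (hA : ∀ i j, Integrable fun t => A t i j)
    (hB : ∀ i j, Integrable fun t => B t i j) :
    kernelNorm D (mconv D A B) = kernelNorm D A * kernelNorm D B := by
  ext i j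
  calc ∫ t, ∑ k, ∫ s, A s i k * B (t - s) k j
      = ∑ k, ∫ t, ∫ s, A s i k * B (t - s) k j :=
        integral_finsetSum _ fun k _ =>
          (hA i k).integrable_convolution (ContinuousLinearMap.mul ℝ ℝ) (hB k j)
    _ = ∑ k, (∫ t, A t i k) * ∫ t, B t k j :=
        Finset.sum_congr rfl fun k _ =>
          integral_convolution (ContinuousLinearMap.mul ℝ ℝ) (hA i k) (hB k j)

theorem mconvIter_nonneg (hΦ : ∀ t i j, 0 ≤ Φ t i j) (k : ℕ) :
    ∀ t i j, 0 ≤ mconvIter D Φ k t i j := by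
  induction k with
  | zero => exact hΦ
  | succ k ih => exact mconv_nonneg hΦ ih

theorem mconvIter_eq_zero_of_neg (hΦ : ∀ t < 0, Φ t = 0) (k : ℕ) :
    ∀ t < 0, mconvIter D Φ k t = 0 := by
  induction k with
  | zero => exact hΦ
  | succ k ih => exact fun t => mconv_eq_zero_of_neg hΦ ih

theorem integrable_mconvIter (hΦ : ∀ i j, Integrable fun t => Φ t i j) (k : ℕ) :
    ∀ i j, Integrable fun t => mconvIter D Φ k t i j := by
  induction k with
  | zero => exact hΦ
  | succ k ih => exact integrable_mconv hΦ ih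

theorem kernelNorm_mconvIter (hΦ : ∀ i j, Integrable fun t => Φ t i j) (k : ℕ) :
    kernelNorm D (mconvIter D Φ k) = kernelNorm D Φ ^ (k + 1) := by
  induction k with
  | zero => rw [zero_add, pow_one, mconvIter]
  | succ k ih => rw [mconvIter, kernelNorm_mconv hΦ (integrable_mconvIter hΦ k), ih, ← pow_succ']

end Convolution

section Series

variable {D : ℕ} {Φ : ℝ → Matrix (Fin D) (Fin D) ℝ}

theorem hasSum_kernelNorm_mconvIter (hint : ∀ i j, Integrable fun t => Φ t i j)
    (hH : HypothesisH D Φ) :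
    HasSum (fun k => kernelNorm D (mconvIter D Φ k))
      ((1 - kernelNorm D Φ)⁻¹ * kernelNorm D Φ) := by
  simpa only [kernelNorm_mconvIter hint] using
    hasSum_pow_succ_of_summable_pow (summable_pow_of_spectralRadius_map_ofReal_lt_one hH)

theorem hasSum_integral_mconvIter (hint : ∀ i j, Integrable fun t => Φ t i j)
    (hH : HypothesisH D Φ) (i j : Fin D) :
    HasSum (fun k => ∫ t, mconvIter D Φ k t i j)
      (((1 - kernelNorm D Φ)⁻¹ * kernelNorm D Φ) i j) :=
  Pi.hasSum.1 (Pi.hasSum.1 (hasSum_kernelNorm_mconvIter hint hH) i) j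

theorem summable_integral_norm_mconvIter (hnonneg : ∀ t i j, 0 ≤ Φ t i j)
    (hint : ∀ i j, Integrable fun t => Φ t i j) (hH : HypothesisH D Φ) (i j : Fin D) :
    Summable fun k => ∫ t, ‖mconvIter D Φ k t i j‖ := by
  simpa only [Real.norm_of_nonneg (mconvIter_nonneg hnonneg _ _ i j)] using
    (hasSum_integral_mconvIter hint hH i j).summable

theorem hawkesPsi_nonneg (hΦ : ∀ t i j, 0 ≤ Φ t i j) (t : ℝ) (i j : Fin D) :
    0 ≤ hawkesPsi D Φ t i j :=
  tsum_nonneg fun k => mconvIter_nonneg hΦ k t i j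

theorem hawkesPsi_eq_zero_of_neg (hΦ : ∀ t < 0, Φ t = 0) {t : ℝ} (ht : t < 0) :
    hawkesPsi D Φ t = 0 := by
  ext i j
  simp only [hawkesPsi, mconvIter_eq_zero_of_neg hΦ _ t ht, of_apply, Matrix.zero_apply, tsum_zero]

theorem integrable_hawkesPsi (hnonneg : ∀ t i j, 0 ≤ Φ t i j)
    (hint : ∀ i j, Integrable fun t => Φ t i j) (hH : HypothesisH D Φ) (i j : Fin D) :
    Integrable fun t => hawkesPsi D Φ t i j :=
  integrable_tsum_of_summable_integral_norm (fun k => integrable_mconvIter hint k i j)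
    (summable_integral_norm_mconvIter hnonneg hint hH i j)

theorem kernelNorm_hawkesPsi (hnonneg : ∀ t i j, 0 ≤ Φ t i j)
    (hint : ∀ i j, Integrable fun t => Φ t i j) (hH : HypothesisH D Φ) :
    kernelNorm D (hawkesPsi D Φ) = (1 - kernelNorm D Φ)⁻¹ * kernelNorm D Φ := by
  ext i j
  have hswap : HasSum (fun k => ∫ t, mconvIter D Φ k t i j) (∫ t, hawkesPsi D Φ t i j) :=
    hasSum_integral_of_summable_integral_norm (fun k => integrable_mconvIter hint k i j)
      (summable_integral_norm_mconvIter hnonneg hint hH i j)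
  exact hswap.unique (hasSum_integral_mconvIter hint hH i j)

end Series

/-- Under hypothesis (H), the series `Ψ = ∑_{k=1}^∞ Φ^{⋆k}` converges
absolutely in `L¹` entrywise; `Ψ` has nonnegative, causal, integrable entries and its matrix
of `L¹` norms is entrywise bounded by `(I - ‖Φ‖)⁻¹ ‖Φ‖`. -/
theorem hawkesPsi_welldefined (D : ℕ) (hD : 0 < D)
    (Φ : ℝ → Matrix (Fin D) (Fin D) ℝ)
    (hΦ : IsHawkesKernel D Φ) (hH : HypothesisH D Φ) :
    (∀ i j, Summable fun k : ℕ => ∫ t : ℝ, mconvIter D Φ k t i j) ∧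
    (∀ t, ∀ i j, 0 ≤ hawkesPsi D Φ t i j) ∧
    (∀ t < (0 : ℝ), hawkesPsi D Φ t = 0) ∧
    (∀ i j, Integrable fun t => hawkesPsi D Φ t i j) ∧
    (∀ i j, (∫ t : ℝ, hawkesPsi D Φ t i j) ≤
      ((1 - kernelNorm D Φ)⁻¹ * kernelNorm D Φ) i j) := by
  obtain ⟨-, hnonneg, hint, hcausal⟩ := hΦ
  exact ⟨fun i j => (hasSum_integral_mconvIter hint hH i j).summable,
    hawkesPsi_nonneg hnonneg,
    fun _ => hawkesPsi_eq_zero_of_neg hcausal,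
    integrable_hawkesPsi hnonneg hint hH,
    fun i j => (congrFun₂ (kernelNorm_hawkesPsi hnonneg hint hH) i j).le⟩
end

section
/- Let Φ be a Hawkes kernel matrix satisfying hypothesis (H), Ψ = Σ_{k=1}^∞ Φ^{⋆k}, Σ a diagonal D×D matrix with strictly positive diagonal entries, and let g be the associated conditional-expectation matrix. Then g satisfies the symmetry relation g(−t) = Σ g(t)ᵀ Σ^{−1} for almost every t ∈ ℝ; entrywise, g^{ij}(−t) = (Λ^i/Λ^j) g^{ji}(t) where Λ^i = Σ^{ii}. -/
open MeasureTheory Matrix Filter Set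

/-!
For an invertible matrix `S` write `F†(t) = S F(-t)ᵀ S⁻¹`. The operation `†` is additive, it is
involutive when `S` is symmetric, and it reverses convolutions when `S` is diagonal:
`(A ⋆ B)† = B† ⋆ A†`. The conditional-expectation matrix is `g = Ψ + Ψ† + Ψ ⋆ Ψ†`, so `g† = g`.
-/

section DiagonalConjugation

variable {n K : Type*} [Fintype n] [DecidableEq n] [Field K] {S : Matrix n n K}

theorem isUnit_iff_forall_diag_ne_zero (hSdiag : S.IsDiag) : IsUnit S ↔ ∀ i, S i i ≠ 0 := by
  rw [← hSdiag.diagonal_diag]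
  simp only [isUnit_diagonal, Pi.isUnit_iff, isUnit_iff_ne_zero, diag_apply, diagonal_apply_eq]

theorem isDiag_mul_mul_inv_apply (hSdiag : S.IsDiag) (hSunit : IsUnit S) (M : Matrix n n K)
    (i j : n) : (S * M * S⁻¹) i j = S i i / S j j * M i j := by
  have hSj : S j j ≠ 0 := (isUnit_iff_forall_diag_ne_zero hSdiag).1 hSunit j
  have hcancel : S * M * S⁻¹ * S = S * M :=
    nonsing_inv_mul_cancel_right S (S * M) ((isUnit_iff_isUnit_det S).1 hSunit)
  have hentry : (S * M * S⁻¹) i j * S j j = S i i * M i j := by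
    have h := congrFun₂ hcancel i j
    rwa [← hSdiag.diagonal_diag, mul_diagonal, diagonal_mul, hSdiag.diagonal_diag] at h
  rw [div_mul_eq_mul_div, eq_div_iff hSj, hentry]

end DiagonalConjugation

section WeightedAdjoint

variable {T n R : Type*} [Fintype n] [DecidableEq n] [CommRing R]

/-- The adjoint `F†(t) = S F(-t)ᵀ S⁻¹` of a matrix-valued function `F` with respect to the weight
matrix `S`. The function `q` of the Hawkes process is `Ψ†` for the weight `Σ`. -/
noncomputable def weightedAdjoint [Neg T] (S : Matrix n n R) (F : T → Matrix n n R) :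
    T → Matrix n n R :=
  fun t => S * (F (-t))ᵀ * S⁻¹

theorem weightedAdjoint_add [Neg T] (S : Matrix n n R) (F G : T → Matrix n n R) :
    weightedAdjoint S (F + G) = weightedAdjoint S F + weightedAdjoint S G := by
  funext t
  simp only [weightedAdjoint, Pi.add_apply, transpose_add, mul_add, add_mul]

theorem weightedAdjoint_weightedAdjoint [InvolutiveNeg T] {S : Matrix n n R} (hSsymm : S.IsSymm)
    (hSunit : IsUnit S) (F : T → Matrix n n R) :
    weightedAdjoint S (weightedAdjoint S F) = F := by
  have hdet : IsUnit S.det := (isUnit_iff_isUnit_det S).1 hSunit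
  funext t
  calc S * (S * (F (- -t))ᵀ * S⁻¹)ᵀ * S⁻¹
      = S * (S⁻¹ * (F t * S)) * S⁻¹ := by
        rw [neg_neg, transpose_mul, transpose_mul, transpose_transpose, transpose_nonsing_inv,
          hSsymm.eq]
    _ = F t := by
        rw [mul_nonsing_inv_cancel_left S _ hdet, mul_nonsing_inv_cancel_right S _ hdet]

end WeightedAdjoint

section Hawkes

variable {D : ℕ} {S : Matrix (Fin D) (Fin D) ℝ}

theorem weightedAdjoint_mconv (hSdiag : S.IsDiag) (hSunit : IsUnit S)
    (A B : ℝ → Matrix (Fin D) (Fin D) ℝ) :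
    weightedAdjoint S (mconv D A B) = mconv D (weightedAdjoint S B) (weightedAdjoint S A) := by
  have hne : ∀ k, S k k ≠ 0 := (isUnit_iff_forall_diag_ne_zero hSdiag).1 hSunit
  ext t i j
  simp only [weightedAdjoint, mconv, isDiag_mul_mul_inv_apply hSdiag hSunit, transpose_apply,
    of_apply, Finset.mul_sum]
  refine Finset.sum_congr rfl fun k _ => ?_
  have hweights (s : ℝ) :
      S i i / S k k * B (-s) k i * (S k k / S j j * A (-(t - s)) j k) =
        S i i / S j j * (A (s - t) j k * B (-t - (s - t)) k i) := by
    rw [neg_sub, show -t - (s - t) = -s by ring]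
    field_simp [hne k]
  calc S i i / S j j * ∫ s, A s j k * B (-t - s) k i
      = S i i / S j j * ∫ s, A (s - t) j k * B (-t - (s - t)) k i := by
        rw [integral_sub_right_eq_self (fun s => A s j k * B (-t - s) k i) t]
    _ = ∫ s, S i i / S k k * B (-s) k i * (S k k / S j j * A (-(t - s)) j k) := by
        simp only [hweights, integral_const_mul]

theorem weightedAdjoint_add_add_mconv_self (hSdiag : S.IsDiag) (hSunit : IsUnit S)
    (F : ℝ → Matrix (Fin D) (Fin D) ℝ) :
    weightedAdjoint S (F + weightedAdjoint S F + mconv D F (weightedAdjoint S F)) =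
      F + weightedAdjoint S F + mconv D F (weightedAdjoint S F) := by
  rw [weightedAdjoint_add, weightedAdjoint_add, weightedAdjoint_mconv hSdiag hSunit,
    weightedAdjoint_weightedAdjoint hSdiag.isSymm hSunit, add_comm (weightedAdjoint S F)]

theorem hawkesG_symmetry_general (Φ : ℝ → Matrix (Fin D) (Fin D) ℝ) (hSdiag : S.IsDiag)
    (hSunit : IsUnit S) (t : ℝ) :
    hawkesG D Φ S (-t) = S * (hawkesG D Φ S t)ᵀ * S⁻¹ ∧
      ∀ i j, hawkesG D Φ S (-t) i j = (S i i / S j j) * hawkesG D Φ S t j i := by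
  have hself : weightedAdjoint S (hawkesG D Φ S) = hawkesG D Φ S :=
    weightedAdjoint_add_add_mconv_self hSdiag hSunit (hawkesPsi D Φ)
  have hmatrix : hawkesG D Φ S (-t) = S * (hawkesG D Φ S t)ᵀ * S⁻¹ := by
    simpa only [weightedAdjoint, neg_neg] using (congrFun hself (-t)).symm
  refine ⟨hmatrix, fun i j => ?_⟩
  rw [hmatrix, isDiag_mul_mul_inv_apply hSdiag hSunit, transpose_apply]

end Hawkes

/-- The conditional-expectation matrix satisfies the symmetry relation
`g(-t) = Σ g(t)ᵀ Σ⁻¹`, i.e. entrywise `g^{ij}(-t) = (Λ^i / Λ^j) g^{ji}(t)`. -/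
theorem hawkesG_symmetry (D : ℕ) (hD : 0 < D)
    (Φ : ℝ → Matrix (Fin D) (Fin D) ℝ)
    (hΦ : IsHawkesKernel D Φ) (hH : HypothesisH D Φ)
    (S : Matrix (Fin D) (Fin D) ℝ) (hSdiag : S.IsDiag) (hSpos : ∀ i, 0 < S i i) :
    ∀ᵐ t : ℝ, hawkesG D Φ S (-t) = S * (hawkesG D Φ S t)ᵀ * S⁻¹ ∧
      ∀ i j, hawkesG D Φ S (-t) i j = (S i i / S j j) * hawkesG D Φ S t j i := by
  have hSunit : IsUnit S := (isUnit_iff_forall_diag_ne_zero hSdiag).2 fun i => (hSpos i).ne'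
  exact .of_forall (hawkesG_symmetry_general Φ hSdiag hSunit)
end
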